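/- If G is a connected chordal graph admitting a tree representation whose host tree is a subdivision of a star, then lpt(G) = 1; that is, some vertex of G belongs to every longest path of G. -/

import Mathlib

open SimpleGraph

/-- A graph is chordal if every cycle on at least 4 vertices has a chord
(an edge of the graph joining two vertices of the cycle that is not an edge of the cycle). -/
def IsChordal {V : Type} (G : SimpleGraph V) : Prop :=
  ∀ (v : V) (c : G.Walk v v), c.IsCycle → 4 ≤ c.length →
    ∃ a b : V, a ∈ c.support ∧ b ∈ c.support ∧ G.Adj a b ∧ s(a, b) ∉ c.edges

/-- A tree representation of `G` with host tree `T`: each vertex `u` of `G` gets a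
nonempty subtree `S u` of `T`, and distinct vertices are adjacent iff their subtrees meet. -/
structure TreeRep {V W : Type} (G : SimpleGraph V) (T : SimpleGraph W) : Type where
  isTree : T.IsTree
  S : V → Set W
  subtree_connected : ∀ u : V, (T.induce (S u)).Connected
  adj_iff : ∀ u v : V, u ≠ v → (G.Adj u v ↔ (S u ∩ S v).Nonempty)

/-- A tree representation is minimal if no tree representation of `G` has a host tree
with fewer vertices. -/
def TreeRep.IsMinimal {V W : Type} [Fintype W] {G : SimpleGraph V} {T : SimpleGraph W}
    (_R : TreeRep G T) : Prop :=
  ∀ (W' : Type) [Fintype W'] (T' : SimpleGraph W'),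
    Nonempty (TreeRep G T') → Fintype.card W ≤ Fintype.card W'

/-- The bag of a host tree vertex `x`. -/
def TreeRep.bag {V W : Type} {G : SimpleGraph V} {T : SimpleGraph W}
    (R : TreeRep G T) (x : W) : Set V :=
  {u : V | x ∈ R.S u}

/-- In `T` rooted at `r`, the (vertex set of the) subtree rooted at `x`: all vertices `w`
such that the `r`–`w` path contains `x`. -/
def rootedSubtree {W : Type} (T : SimpleGraph W) (r x : W) : Set W :=
  {w : W | ∀ p : T.Walk r w, p.IsPath → x ∈ p.support}

/-- The core of a subgraph `H` of `G`: the union over edges `uv` of `H` of `V(S u ∩ S v)`,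
a set of host-tree vertices. -/
def TreeRep.core {V W : Type} {G : SimpleGraph V} {T : SimpleGraph W}
    (R : TreeRep G T) (H : G.Subgraph) : Set W :=
  {t : W | ∃ u v : V, H.Adj u v ∧ t ∈ R.S u ∧ t ∈ R.S v}

/-- `C` is a connected component of the subgraph of `T` induced on the vertex set `s`. -/
def IsCompOf {W : Type} (T : SimpleGraph W) (s C : Set W) : Prop :=
  C.Nonempty ∧ C ⊆ s ∧ (T.induce C).Connected ∧
    ∀ ⦃a b : W⦄, a ∈ C → b ∈ s → T.Adj a b → b ∈ C

/-- A graph is 2-connected if it has more than 2 vertices and deleting any one vertex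
leaves it connected. -/
def TwoConnected {V : Type} (G : SimpleGraph V) : Prop :=
  2 < Nat.card V ∧ ∀ v : V, (G.induce {v}ᶜ).Connected

/-- `G` is `k`-connected: more than `k` vertices, and deleting fewer than `k` vertices
leaves it connected. -/
def IsKConnectedGraph {V : Type} (G : SimpleGraph V) (k : ℕ) : Prop :=
  k < Nat.card V ∧ ∀ s : Set V, s.Finite → s.ncard < k → (G.induce sᶜ).Connected

/-- The vertex connectivity `κ(G)`: the maximum `k` such that `G` is `k`-connected. -/
noncomputable def vertexConnectivity {V : Type} (G : SimpleGraph V) : ℕ :=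
  sSup {k : ℕ | IsKConnectedGraph G k}

/-- `p` is a path of maximum length in `G`. -/
def IsLongestPath {V : Type} (G : SimpleGraph V) {a b : V} (p : G.Walk a b) : Prop :=
  p.IsPath ∧ ∀ (c d : V) (q : G.Walk c d), q.IsPath → q.length ≤ p.length

/-- `c` is a cycle of maximum length in `G`. -/
def IsLongestCycle {V : Type} (G : SimpleGraph V) {a : V} (c : G.Walk a a) : Prop :=
  c.IsCycle ∧ ∀ (d : V) (q : G.Walk d d), q.IsCycle → q.length ≤ c.length

/-- The longest path transversal number of `G`: the least size of a set of vertices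
meeting every longest path. -/
noncomputable def lpt {V : Type} (G : SimpleGraph V) : ℕ :=
  sInf {k : ℕ | ∃ A : Set V, A.Finite ∧ A.ncard = k ∧
    ∀ (a b : V) (p : G.Walk a b), IsLongestPath G p → ∃ v ∈ A, v ∈ p.support}

/-- The longest cycle transversal number of `G`: the least size of a set of vertices
meeting every longest cycle. -/
noncomputable def lct {V : Type} (G : SimpleGraph V) : ℕ :=
  sInf {k : ℕ | ∃ A : Set V, A.Finite ∧ A.ncard = k ∧
    ∀ (a : V) (c : G.Walk a a), IsLongestCycle G c → ∃ v ∈ A, v ∈ c.support}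

/-- `DQX T q X Q0`: the union, over `y ∈ Q0`, of the component of `X − E(Q)` containing
`y` (all vertices joined to some `y ∈ Q0` by a walk inside `X` avoiding the edges of `q`). -/
def DQX {W : Type} (T : SimpleGraph W) {x z : W} (q : T.Walk x z) (X : Set W)
    (Q0 : Set W) : Set W :=
  {w : W | ∃ y ∈ Q0, ∃ d : (T.deleteEdges {e : Sym2 W | e ∈ q.edges}).Walk y w,
    ∀ a ∈ d.support, a ∈ X}

/-- Cutter can force the Cutter–Chooser game from position `(X, x)` (a subtree `X` of the
host tree, rooted at `x`) to end within `t` rounds: Cutter picks `z ∈ X` and cuts along the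
`x`–`z` path `Q` in `X`; either `X = Q` (game over), or for every component `X'` of
`X − V(Q)` (with its root `x'`, the vertex of `X'` adjacent to `Q`) that Chooser may pick,
Cutter wins within `t - 1` further rounds. -/
def cutterWins {W : Type} (T : SimpleGraph W) : ℕ → Set W → W → Prop
  | 0, _, _ => False
  | t + 1, X, x =>
      ∃ z ∈ X, ∃ p : T.Walk x z, p.IsPath ∧ (∀ w ∈ p.support, w ∈ X) ∧
        (X = {w : W | w ∈ p.support} ∨
          ∀ (X' : Set W) (x' : W), IsCompOf T (X \ {w : W | w ∈ p.support}) X' →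
            x' ∈ X' → (∃ u ∈ p.support, T.Adj u x') → cutterWins T t X' x')

/-- `ccg(X, x)`: the number of rounds of the Cutter–Chooser game on the subtree `X` of the
host tree rooted at `x`, under optimal play. -/
noncomputable def ccgOn {W : Type} (T : SimpleGraph W) (X : Set W) (x : W) : ℕ :=
  sInf {t : ℕ | cutterWins T t X x}

/-- `ccg(T)`: the minimum over roots `r` of `ccg(T, r)`. -/
noncomputable def ccg {W : Type} (T : SimpleGraph W) : ℕ :=
  sInf (Set.range fun r : W => ccgOn T Set.univ r)

/-- A subdivided caterpillar: a tree having a (spine) path containing every vertex of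
degree at least 3. -/
def IsSubdividedCaterpillar {W : Type} (T : SimpleGraph W) : Prop :=
  T.IsTree ∧ ∃ (a b : W) (q : T.Walk a b), q.IsPath ∧
    ∀ v : W, 3 ≤ (T.neighborSet v).ncard → v ∈ q.support

/-- A subdivided star: a tree with at most one vertex of degree at least 3. -/
def IsSubdividedStar {W : Type} (T : SimpleGraph W) : Prop :=
  T.IsTree ∧ ∀ v w : W, 3 ≤ (T.neighborSet v).ncard → 3 ≤ (T.neighborSet w).ncard → v = w

/-- A leaf: a vertex of degree 1. -/
def IsLeaf {W : Type} (T : SimpleGraph W) (v : W) : Prop := (T.neighborSet v).ncard = 1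

/-- `mf T`: the maximum over edges `e` of `T` of the minimum number of leaves of `T`
contained in a component of `T − e`. -/
noncomputable def mf {W : Type} (T : SimpleGraph W) : ℕ :=
  sSup {k : ℕ | ∃ u v : W, T.Adj u v ∧
    k = min {w : W | IsLeaf T w ∧ (T.deleteEdges {s(u, v)}).Reachable u w}.ncard
            {w : W | IsLeaf T w ∧ (T.deleteEdges {s(u, v)}).Reachable v w}.ncard}

/-- In `T` rooted at `r`, `v` is a child of `u`. -/
def IsChildIn {W : Type} (T : SimpleGraph W) (r u v : W) : Prop :=
  T.Adj u v ∧ ∀ p : T.Walk r v, p.IsPath → u ∈ p.support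

/-- In `T` rooted at `r`, `u` is childless. -/
def IsChildlessIn {W : Type} (T : SimpleGraph W) (r u : W) : Prop :=
  ¬ ∃ v : W, IsChildIn T r u v

/-! Longest paths of a connected graph pairwise intersect. Each of them covers a subtree of the host
tree, namely the union of the subtrees of its vertices, so by a Helly argument some host vertex
`x` is covered by all longest paths: root the host tree at the centre `r` of the star and let `x`
be the top of a covered subtree whose top is furthest from `r`. The bag of `x` is then a clique
`B` meeting every longest path.

Beyond `x`, every branch of the host tree not containing `r` is a path, so some `v ∈ B` reaches
furthest into it and sees all vertices `D` of that branch which `B` sees. A longest path that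
misses `v` cannot pass between `B` and `D`, since `v` could be inserted there; so it avoids `D`.
If `x ≠ r`, the path defining `x` lives beyond `x`, and any longest path missing `v` meets it at a
vertex next to which `v` could still be inserted. If `x = r`, take a longest path segment `t`
outside `B` ending next to `B`. It lies in one branch `D`; if a longest path misses the
corresponding `v`, replacing its part before `B` by `t` followed by `v` gives a longer path. -/

section Lists

variable {α : Type*}

theorem iff_of_isChain_iff {P : α → Prop} {l : List α} (h : l.IsChain fun x y => P x ↔ P y)
    {x y : α} (hx : x ∈ l) (hy : y ∈ l) : P x ↔ P y := by
  let R : α → α → Prop := fun x y => P x ↔ P y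
  have : Trans R R R := ⟨Iff.trans⟩
  have : Std.Symm R := ⟨fun _ _ => Iff.symm⟩
  exact List.Pairwise.forall_of_forall (R := R) (fun _ _ => Iff.rfl) h.pairwise hx hy

theorem exists_eq_append_cons_of_exists_mem {s : Set α} {l : List α} (h : ∃ b ∈ l, b ∈ s) :
    ∃ p b q, l = p ++ b :: q ∧ b ∈ s ∧ ∀ u ∈ p, u ∉ s := by
  classical
  obtain ⟨b, hb⟩ := Option.isSome_iff_exists.1
    (List.find?_isSome (p := fun b => decide (b ∈ s)).2 (by simpa using h))
  obtain ⟨hbs, p, q, rfl, hp⟩ := List.find?_eq_some_iff_append.1 hb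
  exact ⟨p, b, q, rfl, by simpa using hbs, by simpa using hp⟩

theorem exists_mem_forall_le_of_bddAbove {s : Set α} {f : α → ℕ} (hf : BddAbove (f '' s))
    (hs : s.Nonempty) : ∃ a ∈ s, ∀ b ∈ s, f b ≤ f a := by
  obtain ⟨_, ⟨a, ha, rfl⟩, hmax⟩ := hf.exists_isGreatest_of_nonempty (hs.image f)
  exact ⟨a, ha, fun b hb => hmax ⟨b, hb, rfl⟩⟩

end Lists

/-- The list `l` enumerates the vertices of a path of `G` in order. Paths are cut and spliced
repeatedly, which is easier for lists than for walks with their endpoints in the type.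
The empty list is allowed. -/
structure IsPathList {V : Type*} (G : SimpleGraph V) (l : List V) : Prop where
  isChain : l.IsChain G.Adj
  nodup : l.Nodup

/-- A path list of maximum length, the list version of `IsLongestPath`. -/
structure IsLongestPathList {V : Type*} (G : SimpleGraph V) (l : List V) : Prop
    extends IsPathList G l where
  length_le : ∀ ⦃l' : List V⦄, IsPathList G l' → l'.length ≤ l.length

section PathLists

variable {V : Type*} {G : SimpleGraph V} {l l' p q : List V} {a v : V} {A B : Set V}

namespace IsPathList

theorem reverse (h : IsPathList G l) : IsPathList G l.reverse :=
  ⟨List.isChain_reverse.2 (h.isChain.imp fun _ _ => .symm), List.nodup_reverse.2 h.nodup⟩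

theorem of_infix (h : IsPathList G l) (hl : l' <:+: l) : IsPathList G l' :=
  ⟨h.isChain.infix hl, h.nodup.sublist hl.sublist⟩

theorem splice (hp : IsPathList G (p ++ [a])) (hq : IsPathList G (a :: q))
    (hpq : p.Disjoint q) : IsPathList G (p ++ a :: q) := by
  refine ⟨List.isChain_split.2 ⟨hp.isChain, hq.isChain⟩, ?_⟩
  obtain ⟨hp_nodup, -, hpa⟩ := List.nodup_append'.1 hp.nodup
  exact List.nodup_append'.2 ⟨hp_nodup, hq.nodup,
    List.disjoint_cons_right.2 ⟨List.disjoint_singleton.1 hpa, hpq⟩⟩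

theorem exists_half_of_mem (h : IsPathList G l) (ha : a ∈ l) :
    ∃ p, IsPathList G (p ++ [a]) ∧ p ⊆ l ∧ l.length ≤ 2 * p.length + 1 := by
  obtain ⟨p, q, rfl⟩ := List.append_of_mem ha
  rcases le_total q.length p.length with hle | hle
  · exact ⟨p, h.of_infix ⟨[], q, by simp⟩, by simp, by simp; omega⟩
  · refine ⟨q.reverse, ?_, by intro; simp +contextual, by simp; omega⟩
    simpa using (h.of_infix (l' := a :: q) ⟨p, [], by simp⟩).reverse

end IsPathList

theorem exists_isPathList_between (hG : G.Preconnected) (hA : A.Nonempty) (hB : B.Nonempty)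
    (hAB : Disjoint A B) :
    ∃ a ∈ A, ∃ b ∈ B, ∃ m, IsPathList G (a :: m ++ [b]) ∧ ∀ x ∈ m, x ∉ A ∧ x ∉ B := by
  obtain ⟨a₀, ha₀⟩ := hA
  obtain ⟨b₀, hb₀⟩ := hB
  obtain ⟨w, hw⟩ := hG.exists_isPath a₀ b₀
  obtain ⟨s, b, t, hst, hb, hs⟩ :=
    exists_eq_append_cons_of_exists_mem (s := B) ⟨b₀, w.end_mem_support, hb₀⟩
  have ha₀s : a₀ ∈ s := by
    have := w.head_support
    cases s with
    | nil => simp_all [Set.disjoint_left.1 hAB ha₀]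
    | cons => simp_all
  obtain ⟨m, a, s', hms, ha, hm⟩ := exists_eq_append_cons_of_exists_mem (s := A) (l := s.reverse)
    ⟨a₀, List.mem_reverse.2 ha₀s, ha₀⟩
  obtain rfl : s = s'.reverse ++ a :: m.reverse := by simpa using congrArg List.reverse hms
  have hpath : IsPathList G w.support := ⟨w.isChain_adj_support, hw.support_nodup⟩
  refine ⟨a, ha, b, hb, m.reverse, hpath.of_infix ⟨s'.reverse, t, by simp [hst]⟩, fun x hx => ?_⟩
  exact ⟨hm x (List.mem_reverse.1 hx), hs x (by simp [List.mem_reverse.1 hx])⟩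

namespace IsLongestPathList

theorem ne_nil [Nonempty V] (h : IsLongestPathList G l) : l ≠ [] := by
  rintro rfl
  obtain ⟨v⟩ := ‹Nonempty V›
  simpa using h.length_le (l' := [v]) ⟨.singleton v, List.nodup_singleton v⟩

theorem mem_of_isChain_insert (h : IsLongestPathList G (p ++ q))
    (hv : (p ++ v :: q).IsChain G.Adj) : v ∈ p ++ q := by
  by_contra hvl
  have := h.length_le ⟨hv, List.nodup_middle.2 (List.nodup_cons.2 ⟨hvl, h.nodup⟩)⟩
  simp at this

theorem finite_of_isClique (h : IsLongestPathList G l) (hB : G.IsClique B) : B.Finite := by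
  by_contra hinf
  obtain ⟨s, hsB, hs⟩ := Set.Infinite.exists_subset_card_eq hinf (l.length + 1)
  have hpath : IsPathList G s.toList := by
    refine ⟨List.Pairwise.isChain ?_, s.nodup_toList⟩
    exact s.nodup_toList.imp_of_mem fun ha hb hab =>
      hB (hsB (Finset.mem_toList.1 ha)) (hsB (Finset.mem_toList.1 hb)) hab
  have := h.length_le hpath
  simp only [Finset.length_toList] at this
  omega

theorem exists_mem_inter (hG : G.Connected) (h : IsLongestPathList G l)
    (h' : IsLongestPathList G l') : ∃ w ∈ l, w ∈ l' := by
  by_contra! hdisj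
  have := hG.nonempty
  obtain ⟨a, ha, b, hb, m, hm, hml⟩ := exists_isPathList_between (A := {x | x ∈ l})
    (B := {x | x ∈ l'}) hG.preconnected (List.exists_mem_of_ne_nil l h.ne_nil)
    (List.exists_mem_of_ne_nil l' h'.ne_nil) (Set.disjoint_left.2 hdisj)
  obtain ⟨p, hp, hpl, hp_len⟩ := h.exists_half_of_mem ha
  obtain ⟨q, hq, hql, hq_len⟩ := h'.exists_half_of_mem hb
  have hmq : IsPathList G (a :: m ++ b :: q.reverse) := by
    refine hm.splice (by simpa using hq.reverse) fun x hx hxq => ?_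
    have hxl' : x ∈ l' := hql (List.mem_reverse.1 hxq)
    rcases List.mem_cons.1 hx with rfl | hx
    · exact hdisj x ha hxl'
    · exact (hml x hx).2 hxl'
  have hpmq : IsPathList G (p ++ a :: (m ++ b :: q.reverse)) := by
    refine hp.splice hmq fun x hx hxr => ?_
    have hxl : x ∈ l := hpl hx
    rcases List.mem_append.1 hxr with hxm | hxb
    · exact (hml x hxm).1 hxl
    · rcases List.mem_cons.1 hxb with rfl | hxq
      · exact hdisj x hxl hb
      · exact hdisj x hxl (hql (List.mem_reverse.1 hxq))
  have hle := h.length_le hpmq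
  have hle' := h'.length_le hpmq
  simp only [List.length_append, List.length_cons, List.length_reverse] at hle hle'
  omega

end IsLongestPathList

end PathLists

/-- The clique `B` separates `D` from the rest of `G`, and its vertex `v` is adjacent to every
vertex of `D` that has a neighbour in `B`; so a path between `B` and `D` can use `v`. -/
structure IsPortal {V : Type*} (G : SimpleGraph V) (B D : Set V) (v : V) : Prop where
  isClique : G.IsClique B
  mem : v ∈ B
  disjoint : Disjoint B D
  mem_union_of_adj : ∀ ⦃d⦄, d ∈ D → ∀ ⦃u⦄, G.Adj d u → u ∈ B ∪ D
  adj_of_adj : ∀ ⦃b⦄, b ∈ B → ∀ ⦃d⦄, d ∈ D → G.Adj b d → G.Adj v d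

/-- `t` is the part of a path before its first vertex in `B`. -/
def IsTail {V : Type*} (G : SimpleGraph V) (B : Set V) (t : List V) : Prop :=
  (∀ u ∈ t, u ∉ B) ∧ ∃ b ∈ B, IsPathList G (t ++ [b])

section Portals

variable {V : Type*} {G : SimpleGraph V} {B D : Set V} {v w : V} {l t : List V}

theorem isPortal_empty (hB : G.IsClique B) (hv : v ∈ B) : IsPortal G B ∅ v :=
  ⟨hB, hv, Set.disjoint_empty B, by simp, by simp⟩

theorem IsLongestPathList.exists_longest_isTail (hl : IsLongestPathList G l) (hB : B.Nonempty) :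
    ∃ t, IsTail G B t ∧ ∀ s, IsTail G B s → s.length ≤ t.length := by
  obtain ⟨b, hb⟩ := hB
  refine exists_mem_forall_le_of_bddAbove (s := {t | IsTail G B t}) (f := List.length)
    ⟨l.length, ?_⟩ ⟨[], by simp, b, hb, .singleton b, List.nodup_singleton b⟩
  rintro _ ⟨t, ⟨-, b, -, ht⟩, rfl⟩
  exact hl.length_le (ht.of_infix ⟨[], [b], rfl⟩)

namespace IsPortal

theorem mem_of_isChain_of_forall_notMem (h : IsPortal G B D v) (hl : l.IsChain G.Adj)
    (hlB : ∀ u ∈ l, u ∉ B) (hwl : w ∈ l) (hwD : w ∈ D) : ∀ u ∈ l, u ∈ D := by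
  have hiff : l.IsChain fun x y => x ∈ D ↔ y ∈ D := by
    refine List.isChain_iff_forall_rel_of_append_cons_cons.2 ?_
    rintro x y p q rfl
    have hxy : G.Adj x y := (List.isChain_append_cons_cons.1 hl).2.1
    exact ⟨fun hx => (h.mem_union_of_adj hx hxy).resolve_left (hlB y (by simp)),
      fun hy => (h.mem_union_of_adj hy hxy.symm).resolve_left (hlB x (by simp))⟩
  exact fun u hu => (iff_of_isChain_iff hiff hwl hu).1 hwD

theorem notMem_of_notMem (h : IsPortal G B D v) (hl : IsLongestPathList G l) (hv : v ∉ l)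
    (hlB : ∃ b ∈ l, b ∈ B) : ∀ d ∈ l, d ∉ D := by
  have hiff : l.IsChain fun x y => x ∈ D ↔ y ∈ D := by
    refine List.isChain_iff_forall_rel_of_append_cons_cons.2 ?_
    rintro x y p q rfl
    obtain ⟨hp, hxy, hq⟩ := List.isChain_append_cons_cons.1 hl.isChain
    have not_adj_both : ¬ (G.Adj v x ∧ G.Adj v y) := by
      rintro ⟨hvx, hvy⟩
      refine hv ?_
      simpa using IsLongestPathList.mem_of_isChain_insert (p := p ++ [x]) (q := y :: q) (v := v)
        (by simpa using hl) (by simp [List.isChain_append_cons_cons, hp, hvx.symm, hvy, hq])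
    have adj_of_mem : ∀ b ∈ p ++ x :: y :: q, b ∈ B → G.Adj v b := fun b hb hbB =>
      h.isClique h.mem hbB (by rintro rfl; exact hv hb)
    constructor
    · refine fun hx => (h.mem_union_of_adj hx hxy).resolve_left fun hy => not_adj_both ?_
      exact ⟨h.adj_of_adj hy hx hxy.symm, adj_of_mem y (by simp) hy⟩
    · refine fun hy => (h.mem_union_of_adj hy hxy.symm).resolve_left fun hx => not_adj_both ?_
      exact ⟨adj_of_mem x (by simp) hx, h.adj_of_adj hx hy hxy⟩
  obtain ⟨b, hbl, hbB⟩ := hlB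
  intro d hdl hdD
  exact Set.disjoint_left.1 h.disjoint hbB ((iff_of_isChain_iff hiff hdl hbl).1 hdD)

theorem mem_of_neighbors_subset (h : IsPortal G B D v) (hl : IsLongestPathList G l)
    (hlB : ∃ b ∈ l, b ∈ B) (hwl : w ∈ l) (hw : w ∈ B ∪ D)
    (hwN : ∀ u, G.Adj w u → u ∈ B ∪ D) : v ∈ l := by
  by_contra hv
  have hlD := h.notMem_of_notMem hl hv hlB
  have adj_of_mem : ∀ b ∈ l, b ∈ B ∪ D → G.Adj v b := fun b hb hbBD =>
    h.isClique h.mem (hbBD.resolve_right (hlD b hb)) (by rintro rfl; exact hv hb)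
  have hvw : G.Adj v w := adj_of_mem w hwl hw
  obtain ⟨p, q, rfl⟩ := List.append_of_mem hwl
  refine hv ?_
  suffices (p ++ w :: v :: q).IsChain G.Adj by
    simpa using IsLongestPathList.mem_of_isChain_insert (p := p ++ [w]) (q := q) (v := v)
      (by simpa using hl) (by simpa using this)
  obtain ⟨hp, hq⟩ := List.isChain_split.1 hl.isChain
  refine List.isChain_append_cons_cons.2 ⟨hp, hvw.symm, ?_⟩
  cases q with
  | nil => exact .singleton v
  | cons u q =>
    obtain ⟨hwu, hq⟩ := List.isChain_cons_cons.1 hq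
    exact List.isChain_cons_cons.2 ⟨adj_of_mem u (by simp) (hwN u hwu), hq⟩

theorem isPathList_append_singleton (h : IsPortal G B D v) (ht : IsTail G B t)
    (htD : ∀ u ∈ t, u ∈ D) : IsPathList G (t ++ [v]) := by
  obtain ⟨htB, b, hb, htb⟩ := ht
  have hvt : v ∉ t := fun hvt => htB v hvt h.mem
  refine ⟨?_, List.nodup_middle.2 (by simpa [hvt] using htb.nodup.of_append_left)⟩
  obtain ⟨ht_chain, -, hlast⟩ := List.isChain_append.1 htb.isChain
  refine List.isChain_append.2 ⟨ht_chain, .singleton v, fun u hu _ hv => ?_⟩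
  obtain rfl : v = _ := by simpa using hv
  exact (h.adj_of_adj hb (htD u (List.mem_of_getLast? hu)) (hlast u hu b rfl).symm).symm

theorem mem_of_longest_isTail (h : IsPortal G B D v) (ht : IsTail G B t)
    (htD : ∀ u ∈ t, u ∈ D) (hmax : ∀ s, IsTail G B s → s.length ≤ t.length)
    (hl : IsLongestPathList G l) (hlB : ∃ b ∈ l, b ∈ B) : v ∈ l := by
  by_contra hv
  have hlD := h.notMem_of_notMem hl hv hlB
  obtain ⟨s, b, q, rfl, hb, hs⟩ := exists_eq_append_cons_of_exists_mem hlB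
  have hs_le : s.length ≤ t.length := hmax s ⟨hs, b, hb, hl.of_infix ⟨[], q, by simp⟩⟩
  have hvb : G.Adj v b := h.isClique h.mem hb (by rintro rfl; simp at hv)
  have hvbq : IsPathList G (v :: b :: q) :=
    ⟨List.isChain_cons_cons.2 ⟨hvb, (List.isChain_split.1 hl.isChain).2⟩,
      List.nodup_cons.2 ⟨fun hvq => hv (by simp_all), hl.nodup.of_append_right⟩⟩
  have hnew : IsPathList G (t ++ v :: b :: q) :=
    (h.isPathList_append_singleton ht htD).splice hvbq fun u hut huq =>
      hlD u (List.mem_append_right s huq) (htD u hut)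
  have := hl.length_le hnew
  simp only [List.length_append, List.length_cons] at this
  omega

end IsPortal

end Portals

theorem subset_of_preconnected_induce {W : Type*} {T : SimpleGraph W} {S P : Set W}
    (hS : (T.induce S).Preconnected) (hSP : (S ∩ P).Nonempty)
    (hP : ∀ a ∈ S, a ∈ P → ∀ b ∈ S, T.Adj a b → b ∈ P) : S ⊆ P := by
  obtain ⟨a, haS, haP⟩ := hSP
  intro b hb
  have hreach := (reachable_iff_reflTransGen _ _).1 (hS ⟨a, haS⟩ ⟨b, hb⟩)
  suffices ∀ c : S, Relation.ReflTransGen (T.induce S).Adj ⟨a, haS⟩ c → (c : W) ∈ P from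
    this _ hreach
  intro c hc
  induction hc with
  | refl => exact haP
  | tail _ hadj ih => exact hP _ (Subtype.property _) ih _ (Subtype.property _) hadj

section RootedTrees

variable {W : Type} {T : SimpleGraph W} {r a b c : W} {S : Set W}

theorem mem_rootedSubtree_self (a : W) : a ∈ rootedSubtree T r a :=
  fun p _ => p.end_mem_support

theorem mem_rootedSubtree_root (a : W) : a ∈ rootedSubtree T r r :=
  fun p _ => p.start_mem_support

theorem eq_root_of_root_mem_rootedSubtree (h : r ∈ rootedSubtree T r a) : a = r := by
  simpa using h .nil .nil

theorem rootedSubtree_subset (h : b ∈ rootedSubtree T r a) :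
    rootedSubtree T r b ⊆ rootedSubtree T r a := by
  classical
  intro c hc p hp
  exact p.support_takeUntil_subset_support (hc p hp) (h _ (hp.takeUntil (hc p hp)))

theorem mem_rootedSubtree_of_adj (h : b ∈ rootedSubtree T r a) (hne : b ≠ a)
    (hbc : T.Adj b c) : c ∈ rootedSubtree T r a := by
  classical
  intro p hp
  by_cases hb : b ∈ p.support
  · exact p.support_takeUntil_subset_support hb (h _ (hp.takeUntil hb))
  · have ha := h _ (hp.concat hb hbc.symm)
    simpa [Walk.support_concat, hne.symm] using ha

theorem dist_lt_of_mem_rootedSubtree (hT : T.Connected) (h : b ∈ rootedSubtree T r a)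
    (hne : a ≠ b) : T.dist r a < T.dist r b := by
  classical
  obtain ⟨p, hp, hlen⟩ := hT.exists_path_of_dist r b
  calc T.dist r a ≤ (p.takeUntil a (h p hp)).length := dist_le _
    _ < p.length := p.length_takeUntil_lt_length (h p hp) hne
    _ = T.dist r b := hlen

theorem dist_le_of_mem_rootedSubtree (hT : T.Connected) (h : b ∈ rootedSubtree T r a) :
    T.dist r a ≤ T.dist r b := by
  rcases eq_or_ne a b with rfl | hne
  · rfl
  · exact (dist_lt_of_mem_rootedSubtree hT h hne).le

theorem eq_of_mem_rootedSubtree_of_mem_rootedSubtree (hT : T.Connected)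
    (hab : b ∈ rootedSubtree T r a) (hba : a ∈ rootedSubtree T r b) : a = b := by
  by_contra hne
  exact (dist_lt_of_mem_rootedSubtree hT hab hne).not_ge (dist_le_of_mem_rootedSubtree hT hba)

theorem mem_rootedSubtree_of_mem_support (hT : T.IsAcyclic) {p : T.Walk r b} (hp : p.IsPath)
    (ha : a ∈ p.support) : b ∈ rootedSubtree T r a := by
  intro q hq
  have := hT.subsingleton_path r b
  have hpq : (⟨p, hp⟩ : T.Path r b) = ⟨q, hq⟩ := Subsingleton.elim _ _
  obtain rfl : p = q := congrArg Subtype.val hpq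
  exact ha

theorem mem_rootedSubtree_or_of_adj (hT : T.IsTree) (hab : T.Adj a b) :
    b ∈ rootedSubtree T r a ∨ a ∈ rootedSubtree T r b := by
  obtain ⟨p, hp⟩ := hT.connected.preconnected.exists_isPath r a
  by_cases hb : b ∈ p.support
  · exact .inr (mem_rootedSubtree_of_mem_support hT.isAcyclic hp hb)
  · exact .inl (mem_rootedSubtree_of_mem_support hT.isAcyclic (hp.concat hb hab)
      (by simp [Walk.support_concat]))

theorem exists_child (hT : T.IsTree) (h : b ∈ rootedSubtree T r a) (hne : a ≠ b) :
    ∃ c, T.Adj a c ∧ c ∈ rootedSubtree T r a ∧ b ∈ rootedSubtree T r c := by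
  obtain ⟨p, hp⟩ := hT.connected.preconnected.exists_isPath r b
  obtain ⟨q, q', rfl⟩ := Walk.mem_support_iff_exists_append.1 (h p hp)
  cases q' with
  | nil => exact absurd rfl hne
  | @cons _ c _ hac q' =>
    have hqc : (q.concat hac).IsPath := by
      rw [← Walk.concat_append] at hp
      exact hp.of_append_left
    exact ⟨c, hac, mem_rootedSubtree_of_mem_support hT.isAcyclic hqc (by simp),
      mem_rootedSubtree_of_mem_support hT.isAcyclic hp (by simp)⟩

theorem exists_parent (hT : T.IsTree) (hne : b ≠ r) :
    ∃ a, T.Adj a b ∧ b ∈ rootedSubtree T r a := by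
  obtain ⟨p, hp⟩ := hT.connected.preconnected.exists_isPath r b
  exact ⟨p.penultimate, p.adj_penultimate (Walk.not_nil_of_ne hne.symm),
    mem_rootedSubtree_of_mem_support hT.isAcyclic hp (p.getVert_mem_support _)⟩

theorem subset_rootedSubtree_of_notMem (hS : (T.induce S).Preconnected) (ha : a ∉ S)
    (hSa : (S ∩ rootedSubtree T r a).Nonempty) : S ⊆ rootedSubtree T r a :=
  subset_of_preconnected_induce hS hSa fun _ hb hba _ _ hbc =>
    mem_rootedSubtree_of_adj hba (ne_of_mem_of_not_mem hb ha) hbc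

theorem subset_rootedSubtree_of_adj_root (hT : T.IsTree) (hS : (T.induce S).Preconnected)
    (hr : r ∉ S) (hrc : T.Adj r c) (hSc : (S ∩ rootedSubtree T r c).Nonempty) :
    S ⊆ rootedSubtree T r c := by
  refine subset_of_preconnected_induce hS hSc fun a _ hac b hb hab => ?_
  by_cases hne : a = c
  · subst hne
    refine (mem_rootedSubtree_or_of_adj hT hab).resolve_right fun hab' => ?_
    have hb_mem := hab' hrc.toWalk (by simp [hrc.ne])
    have hbr : b ≠ r := ne_of_mem_of_not_mem hb hr
    simp [hbr, hab.ne'] at hb_mem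
  · exact mem_rootedSubtree_of_adj hac hne hab

theorem mem_of_mem_rootedSubtree_of_mem_rootedSubtree (hT : T.Connected)
    (hS : (T.induce S).Preconnected) (ha : a ∈ S) (hc : c ∈ S)
    (hab : b ∈ rootedSubtree T r a) (hbc : c ∈ rootedSubtree T r b) : b ∈ S := by
  by_contra hb
  have hba : a ∈ rootedSubtree T r b := subset_rootedSubtree_of_notMem hS hb ⟨c, hc, hbc⟩ ha
  exact hb (eq_of_mem_rootedSubtree_of_mem_rootedSubtree hT hab hba ▸ ha)

theorem exists_mem_subset_rootedSubtree (hT : T.IsTree) (hS : (T.induce S).Connected) (r : W) :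
    ∃ m ∈ S, S ⊆ rootedSubtree T r m := by
  obtain ⟨m, hm, hmin⟩ := exists_minimalFor_of_wellFoundedLT (· ∈ S) (T.dist r)
    (Set.nonempty_coe_sort.1 hS.nonempty)
  refine ⟨m, hm, subset_of_preconnected_induce hS.preconnected ⟨m, hm, mem_rootedSubtree_self m⟩
    fun a _ ham b hb hab => ?_⟩
  by_cases hne : a = m
  · subst hne
    refine (mem_rootedSubtree_or_of_adj hT hab).resolve_right fun hba => ?_
    have hlt := dist_lt_of_mem_rootedSubtree hT.connected hba hab.ne'
    exact hlt.not_ge (hmin hb hlt.le)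
  · exact mem_rootedSubtree_of_adj ham hne hab

end RootedTrees

/-- Every vertex of `T` other than `r` has degree at most 2, so that a tree `T` is a subdivided star
centred at `r`. The `encard` rules out vertices of infinite degree, for which `ncard` is `0`. -/
def IsStarCenter {W : Type*} (T : SimpleGraph W) (r : W) : Prop :=
  ∀ ⦃u⦄, u ≠ r → (T.neighborSet u).encard ≤ 2

section StarCenters

variable {W : Type} {T : SimpleGraph W} {r a b c u z : W}

theorem IsSubdividedStar.exists_isStarCenter [Finite W] (h : IsSubdividedStar T) :
    ∃ r, IsStarCenter T r := by
  have encard_le : ∀ u, (T.neighborSet u).ncard < 3 → (T.neighborSet u).encard ≤ 2 := by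
    intro u hu
    rw [← (Set.toFinite (T.neighborSet u)).cast_ncard_eq]
    exact_mod_cast Nat.le_of_lt_succ hu
  by_cases hex : ∃ r, 3 ≤ (T.neighborSet r).ncard
  · obtain ⟨r, hr⟩ := hex
    exact ⟨r, fun u hur => encard_le u (not_le.1 fun hu => hur (h.2 u r hu hr))⟩
  · push Not at hex
    obtain ⟨r⟩ := h.1.connected.nonempty
    exact ⟨r, fun u _ => encard_le u (hex u)⟩

namespace IsStarCenter

theorem eq_of_adj_of_mem_rootedSubtree (hr : IsStarCenter T r) (hT : T.IsTree) (hur : u ≠ r)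
    (hub : T.Adj u b) (hb : b ∈ rootedSubtree T r u) (huc : T.Adj u c)
    (hc : c ∈ rootedSubtree T r u) : b = c := by
  by_contra hbc
  obtain ⟨a, hau, hua⟩ := exists_parent hT hur
  have ne_parent : ∀ d ∈ rootedSubtree T r u, a ≠ d := by
    rintro d hd rfl
    exact hau.ne (eq_of_mem_rootedSubtree_of_mem_rootedSubtree hT.connected hua hd)
  have hthree : ({a, b, c} : Set W).encard = 3 :=
    Set.encard_eq_three.2 ⟨a, b, c, ne_parent b hb, ne_parent c hc, hbc, rfl⟩
  have hsub : {a, b, c} ⊆ T.neighborSet u := by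
    rintro d (rfl | rfl | rfl)
    exacts [hau.symm, hub, huc]
  have hle := (Set.encard_le_encard hsub).trans (hr hur)
  rw [hthree] at hle
  exact absurd hle (by decide)

theorem mem_rootedSubtree_total (hr : IsStarCenter T r) (hT : T.IsTree) (hz : z ≠ r)
    (ha : a ∈ rootedSubtree T r z) (hb : b ∈ rootedSubtree T r z) :
    b ∈ rootedSubtree T r a ∨ a ∈ rootedSubtree T r b := by
  induction hn : T.dist r b using Nat.strong_induction_on generalizing b with
  | _ n ih =>
    by_cases hbz : b = z
    · exact .inr (hbz ▸ ha)
    have hbr : b ≠ r := by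
      rintro rfl
      exact hz (eq_root_of_root_mem_rootedSubtree hb)
    obtain ⟨p, hpb, hbp⟩ := exists_parent hT hbr
    have hp : p ∈ rootedSubtree T r z := mem_rootedSubtree_of_adj hb hbz hpb.symm
    have hpr : p ≠ r := by
      rintro rfl
      exact hz (eq_root_of_root_mem_rootedSubtree hp)
    have hlt : T.dist r p < n := hn ▸ dist_lt_of_mem_rootedSubtree hT.connected hbp hpb.ne
    rcases ih _ hlt hp rfl with hpa | hap
    · exact .inl (rootedSubtree_subset hpa hbp)
    by_cases hpa : p = a
    · exact .inl (hpa ▸ hbp)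
    obtain ⟨c, hpc, hcp, hac⟩ := exists_child hT hap hpa
    exact .inr (hr.eq_of_adj_of_mem_rootedSubtree hT hpr hpc hcp hpb hbp ▸ hac)

end IsStarCenter

end StarCenters

/-- The set of host-tree vertices covered by the subtrees of the vertices in `l`. -/
def TreeRep.cover {V W : Type} {G : SimpleGraph V} {T : SimpleGraph W} (R : TreeRep G T)
    (l : List V) : Set W :=
  {y | ∃ u ∈ l, y ∈ R.S u}

/-- The vertices of `G` represented inside the branch of `T` (rooted at `r`) at `z`,
excluding the bag of `x`. -/
def TreeRep.branch {V W : Type} {G : SimpleGraph V} {T : SimpleGraph W} (R : TreeRep G T)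
    (r x z : W) : Set V :=
  {d | x ∉ R.S d ∧ R.S d ⊆ rootedSubtree T r z}

/-- In `T` rooted at `r`, a subtree can leave the branch at `z` only through `x`. -/
def CutsOff {W : Type} (T : SimpleGraph W) (r x z : W) : Prop :=
  ∀ ⦃S : Set W⦄, (T.induce S).Connected → x ∉ S → (S ∩ rootedSubtree T r z).Nonempty →
    S ⊆ rootedSubtree T r z

theorem cutsOff_self {W : Type} (T : SimpleGraph W) (r x : W) : CutsOff T r x x :=
  fun _ hS => subset_rootedSubtree_of_notMem hS.preconnected

theorem cutsOff_of_adj_root {W : Type} {T : SimpleGraph W} {r c : W} (hT : T.IsTree)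
    (hrc : T.Adj r c) : CutsOff T r r c :=
  fun _ hS hr => subset_rootedSubtree_of_adj_root hT hS.preconnected hr hrc

namespace TreeRep

variable {V W : Type} {G : SimpleGraph V} {T : SimpleGraph W} (R : TreeRep G T) {r x y z : W}
  {u v : V} {l : List V}

theorem nonempty_subtree (u : V) : (R.S u).Nonempty :=
  Set.nonempty_coe_sort.1 (R.subtree_connected u).nonempty

theorem exists_mem_of_adj (h : G.Adj u v) : ∃ y, y ∈ R.S u ∧ y ∈ R.S v :=
  (R.adj_iff u v h.ne).1 h

theorem isClique_bag (x : W) : G.IsClique (R.bag x) :=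
  fun u hu v hv huv => (R.adj_iff u v huv).2 ⟨x, hu, hv⟩

theorem connected_cover : ∀ {l : List V}, l ≠ [] → l.IsChain G.Adj →
    (T.induce (R.cover l)).Connected
  | [], h, _ => absurd rfl h
  | [u], _, _ => by
    have hcover : R.cover [u] = R.S u := by simp [cover]
    exact hcover ▸ R.subtree_connected u
  | u :: v :: l, _, h => by
    obtain ⟨huv, hl⟩ := List.isChain_cons_cons.1 h
    obtain ⟨y, hyu, hyv⟩ := R.exists_mem_of_adj huv
    have hcover : R.cover (u :: v :: l) = R.S u ∪ R.cover (v :: l) := by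
      ext; simp [cover]
    rw [hcover]
    exact induce_union_connected (R.subtree_connected u).preconnected
      (connected_cover (List.cons_ne_nil v l) hl).preconnected ⟨y, hyu, v, by simp, hyv⟩

theorem mem_bag_union_branch (hx : CutsOff T r x z) (hyu : y ∈ R.S u)
    (hyz : y ∈ rootedSubtree T r z) : u ∈ R.bag x ∪ R.branch r x z := by
  by_cases hxu : x ∈ R.S u
  · exact .inl hxu
  · exact .inr ⟨hxu, hx (R.subtree_connected u) hxu ⟨y, hyu, hyz⟩⟩

theorem inter_rootedSubtree_subset_total (hr : IsStarCenter T r) (hzr : z ≠ r)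
    (hzx : z ∈ rootedSubtree T r x) (hu : u ∈ R.bag x) (hv : v ∈ R.bag x) :
    R.S u ∩ rootedSubtree T r z ⊆ R.S v ∩ rootedSubtree T r z ∨
      R.S v ∩ rootedSubtree T r z ⊆ R.S u ∩ rootedSubtree T r z := by
  have mem_of_beyond : ∀ {w a b}, w ∈ R.bag x → b ∈ R.S w → a ∈ rootedSubtree T r z →
      b ∈ rootedSubtree T r a → a ∈ R.S w := fun {w _ _} hw hb ha hba =>
    mem_of_mem_rootedSubtree_of_mem_rootedSubtree R.isTree.connected
      (R.subtree_connected w).preconnected hw hb (rootedSubtree_subset hzx ha) hba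
  by_contra! hcon
  obtain ⟨a, ⟨hau, haz⟩, hav⟩ := Set.not_subset.1 hcon.1
  obtain ⟨b, ⟨hbv, hbz⟩, hbu⟩ := Set.not_subset.1 hcon.2
  rcases hr.mem_rootedSubtree_total R.isTree hzr haz hbz with hba | hab
  · exact hav ⟨mem_of_beyond hv hbv haz hba, haz⟩
  · exact hbu ⟨mem_of_beyond hu hau hbz hab, hbz⟩

theorem exists_isPortal (hr : IsStarCenter T r) (hzr : z ≠ r) (hzx : z ∈ rootedSubtree T r x)
    (hx : CutsOff T r x z) (hfin : (R.bag x).Finite) (hne : (R.bag x).Nonempty) :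
    ∃ v, IsPortal G (R.bag x) (R.branch r x z) v := by
  obtain ⟨v, hv, hmax⟩ :=
    hfin.exists_maximalFor (fun u => R.S u ∩ rootedSubtree T r z) _ hne
  have subset_of_mem : ∀ b ∈ R.bag x, R.S b ∩ rootedSubtree T r z ⊆ R.S v := fun b hb =>
    ((R.inter_rootedSubtree_subset_total hr hzr hzx hb hv).elim id (hmax hb)).trans
      Set.inter_subset_left
  refine ⟨v, R.isClique_bag x, hv, Set.disjoint_left.2 fun b hb hbD => hbD.1 hb, ?_, ?_⟩
  · intro d hd u hdu
    obtain ⟨y, hyd, hyu⟩ := R.exists_mem_of_adj hdu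
    exact R.mem_bag_union_branch hx hyu (hd.2 hyd)
  · intro b hb d hd hbd
    obtain ⟨y, hyb, hyd⟩ := R.exists_mem_of_adj hbd
    exact (R.adj_iff v d (by rintro rfl; exact hd.1 hv)).2
      ⟨y, subset_of_mem b hb ⟨hyb, hd.2 hyd⟩, hyd⟩

theorem bddAbove_dist_top (hG : G.Connected) (r : W) :
    BddAbove (T.dist r '' {m | ∃ l, IsLongestPathList G l ∧ R.cover l ⊆ rootedSubtree T r m}) := by
  by_cases hex : ∃ l, IsLongestPathList G l
  · obtain ⟨l₁, hl₁⟩ := hex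
    choose y hy using R.nonempty_subtree
    obtain ⟨n, hn⟩ := ((List.finite_toSet l₁).image fun w => T.dist r (y w)).bddAbove
    refine ⟨n, ?_⟩
    rintro _ ⟨m, ⟨l, hl, hlm⟩, rfl⟩
    obtain ⟨w, hwl, hwl₁⟩ := hl.exists_mem_inter hG hl₁
    exact (dist_le_of_mem_rootedSubtree R.isTree.connected (hlm ⟨w, hwl, hy w⟩)).trans
      (hn ⟨w, hwl₁, rfl⟩)
  · exact ⟨0, by rintro _ ⟨m, ⟨l, hl, -⟩, -⟩; exact absurd ⟨l, hl⟩ hex⟩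

theorem exists_forall_mem_cover (hG : G.Connected) (r : W) (hex : ∃ l, IsLongestPathList G l) :
    ∃ x l₀, IsLongestPathList G l₀ ∧ R.cover l₀ ⊆ rootedSubtree T r x ∧
      ∀ l, IsLongestPathList G l → x ∈ R.cover l := by
  have := hG.nonempty
  have exists_top : ∀ l, IsLongestPathList G l →
      ∃ m ∈ R.cover l, R.cover l ⊆ rootedSubtree T r m := fun l hl =>
    exists_mem_subset_rootedSubtree R.isTree (R.connected_cover hl.ne_nil hl.isChain) r
  obtain ⟨l₁, hl₁⟩ := hex
  obtain ⟨m₁, -, hm₁⟩ := exists_top l₁ hl₁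
  obtain ⟨x, ⟨l₀, hl₀, hl₀x⟩, hmax⟩ :=
    exists_mem_forall_le_of_bddAbove (R.bddAbove_dist_top hG r) ⟨m₁, l₁, hl₁, hm₁⟩
  refine ⟨x, l₀, hl₀, hl₀x, fun l hl => ?_⟩
  by_contra hxl
  obtain ⟨w, hwl, hwl₀⟩ := hl.exists_mem_inter hG hl₀
  obtain ⟨y, hy⟩ := R.nonempty_subtree w
  have hlx : R.cover l ⊆ rootedSubtree T r x :=
    subset_rootedSubtree_of_notMem (R.connected_cover hl.ne_nil hl.isChain).preconnected hxl
      ⟨y, ⟨w, hwl, hy⟩, hl₀x ⟨w, hwl₀, hy⟩⟩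
  obtain ⟨m, hm, hlm⟩ := exists_top l hl
  have hxm : x ≠ m := (ne_of_mem_of_not_mem hm hxl).symm
  have hlt := dist_lt_of_mem_rootedSubtree R.isTree.connected (hlx hm) hxm
  exact hlt.not_ge (hmax m ⟨l, hl, hlm⟩)

theorem exists_forall_mem_of_ne_center (hG : G.Connected) (hr : IsStarCenter T r) (hxr : x ≠ r)
    {l₀ : List V} (hl₀ : IsLongestPathList G l₀) (hl₀x : R.cover l₀ ⊆ rootedSubtree T r x)
    (hx : ∀ l, IsLongestPathList G l → x ∈ R.cover l) :
    ∃ v, ∀ l, IsLongestPathList G l → v ∈ l := by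
  have hne : (R.bag x).Nonempty := (hx l₀ hl₀).imp fun _ => And.right
  obtain ⟨v, hv⟩ := R.exists_isPortal hr hxr (mem_rootedSubtree_self x) (cutsOff_self T r x)
    (hl₀.finite_of_isClique (R.isClique_bag x)) hne
  refine ⟨v, fun l hl => ?_⟩
  obtain ⟨w, hwl, hwl₀⟩ := hl.exists_mem_inter hG hl₀
  have mem_of_meets : ∀ {u y}, y ∈ R.S w → y ∈ R.S u → u ∈ R.bag x ∪ R.branch r x x :=
    fun hyw hyu => R.mem_bag_union_branch (cutsOff_self T r x) hyu (hl₀x ⟨w, hwl₀, hyw⟩)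
  obtain ⟨y, hy⟩ := R.nonempty_subtree w
  refine hv.mem_of_neighbors_subset hl (hx l hl) hwl (mem_of_meets hy hy) fun u hwu => ?_
  obtain ⟨y', hyw, hyu⟩ := R.exists_mem_of_adj hwu
  exact mem_of_meets hyw hyu

theorem exists_isPortal_center (hr : IsStarCenter T r) (hfin : (R.bag r).Finite)
    (hne : (R.bag r).Nonempty) (hl : l.IsChain G.Adj) (hlr : ∀ u ∈ l, u ∉ R.bag r) :
    ∃ D v, IsPortal G (R.bag r) D v ∧ ∀ u ∈ l, u ∈ D := by
  rcases eq_or_ne l [] with rfl | hl_ne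
  · obtain ⟨v, hv⟩ := hne
    exact ⟨∅, v, isPortal_empty (R.isClique_bag r) hv, by simp⟩
  · obtain ⟨w, hw⟩ := List.exists_mem_of_ne_nil l hl_ne
    obtain ⟨y, hy⟩ := R.nonempty_subtree w
    obtain ⟨c, hrc, -, hyc⟩ := exists_child R.isTree (mem_rootedSubtree_root (T := T) (r := r) y)
      (by rintro rfl; exact hlr w hw hy)
    have hc := cutsOff_of_adj_root R.isTree hrc
    obtain ⟨v, hv⟩ := R.exists_isPortal hr hrc.ne' (mem_rootedSubtree_root c) hc hfin hne
    exact ⟨_, v, hv, hv.mem_of_isChain_of_forall_notMem hl hlr hw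
      ((R.mem_bag_union_branch hc hy hyc).resolve_left (hlr w hw))⟩

theorem exists_forall_mem_of_center (hr : IsStarCenter T r) (hex : ∃ l, IsLongestPathList G l)
    (hx : ∀ l, IsLongestPathList G l → r ∈ R.cover l) :
    ∃ v, ∀ l, IsLongestPathList G l → v ∈ l := by
  obtain ⟨l₀, hl₀⟩ := hex
  have hne : (R.bag r).Nonempty := (hx l₀ hl₀).imp fun _ => And.right
  obtain ⟨t, ht, hmax⟩ := hl₀.exists_longest_isTail hne
  have ht_chain : t.IsChain G.Adj := by
    obtain ⟨-, b, -, htb⟩ := ht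
    exact (List.isChain_append.1 htb.isChain).1
  obtain ⟨D, v, hv, htD⟩ := R.exists_isPortal_center hr
    (hl₀.finite_of_isClique (R.isClique_bag r)) hne ht_chain ht.1
  exact ⟨v, fun l hl => hv.mem_of_longest_isTail ht htD hmax hl (hx l hl)⟩

theorem exists_forall_mem (R : TreeRep G T) (hG : G.Connected) (hr : IsStarCenter T r) :
    ∃ v, ∀ l, IsLongestPathList G l → v ∈ l := by
  by_cases hex : ∃ l, IsLongestPathList G l
  · obtain ⟨x, l₀, hl₀, hl₀x, hx⟩ := R.exists_forall_mem_cover hG r hex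
    rcases eq_or_ne x r with rfl | hxr
    · exact R.exists_forall_mem_of_center hr hex hx
    · exact R.exists_forall_mem_of_ne_center hG hr hxr hl₀ hl₀x hx
  · exact hG.nonempty.elim fun v => ⟨v, fun l hl => absurd ⟨l, hl⟩ hex⟩

end TreeRep

section LongestPaths

variable {V : Type} {G : SimpleGraph V} {a b v : V}

theorem IsLongestPath.isLongestPathList_support {p : G.Walk a b} (h : IsLongestPath G p) :
    IsLongestPathList G p.support := by
  refine ⟨⟨p.isChain_adj_support, h.1.support_nodup⟩, fun l hl => ?_⟩
  rcases eq_or_ne l [] with rfl | hne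
  · simp
  · have hpath : (Walk.ofSupport l hne hl.isChain).IsPath := by
      rw [Walk.isPath_def, Walk.support_ofSupport]
      exact hl.nodup
    have hle := h.2 _ _ _ hpath
    rw [Walk.length_ofSupport] at hle
    rw [Walk.length_support]
    omega

theorem exists_isLongestPath [Nonempty V] [Finite G.edgeSet] :
    ∃ (a b : V) (p : G.Walk a b), IsLongestPath G p := by
  obtain ⟨a, b, p, hp, hmax⟩ := Walk.exists_isPath_forall_isPath_length_le_length G
  exact ⟨a, b, p, hp, hmax⟩

theorem lpt_eq_one (hex : ∃ (a b : V) (p : G.Walk a b), IsLongestPath G p)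
    (hv : ∀ (a b : V) (p : G.Walk a b), IsLongestPath G p → v ∈ p.support) : lpt G = 1 := by
  have hone : 1 ∈ {k : ℕ | ∃ A : Set V, A.Finite ∧ A.ncard = k ∧
      ∀ (a b : V) (p : G.Walk a b), IsLongestPath G p → ∃ v ∈ A, v ∈ p.support} :=
    ⟨{v}, Set.finite_singleton v, Set.ncard_singleton v, fun a b p hp => ⟨v, rfl, hv a b p hp⟩⟩
  refine le_antisymm (Nat.sInf_le hone) (le_csInf ⟨1, hone⟩ ?_)
  rintro _ ⟨A, hA, rfl, hmeets⟩
  obtain ⟨a, b, p, hp⟩ := hex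
  exact (Set.ncard_pos hA).2 ((hmeets a b p hp).imp fun _ => And.left)

end LongestPaths

theorem substar_gallai_general {V W : Type} {G : SimpleGraph V} {T : SimpleGraph W}
    (hconn : G.Connected) (R : TreeRep G T) (hstar : ∃ r, IsStarCenter T r)
    (hex : ∃ (a b : V) (p : G.Walk a b), IsLongestPath G p) :
    lpt G = 1 ∧
      ∃ v : V, ∀ (a b : V) (p : G.Walk a b), IsLongestPath G p → v ∈ p.support := by
  obtain ⟨r, hr⟩ := hstar
  obtain ⟨v, hv⟩ := R.exists_forall_mem hconn hr
  have hv_support : ∀ (a b : V) (p : G.Walk a b), IsLongestPath G p → v ∈ p.support :=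
    fun _ _ p hp => hv p.support hp.isLongestPathList_support
  exact ⟨lpt_eq_one hex hv_support, v, hv_support⟩

/-- If `G` is a connected chordal graph admitting a tree representation
whose host tree is a subdivided star, then `lpt(G) = 1`; that is, some vertex of `G`
belongs to every longest path of `G`. -/
theorem substar_gallai {V W : Type} [Fintype V] [Fintype W] (G : SimpleGraph V)
    (T : SimpleGraph W) (hconn : G.Connected) (hchordal : IsChordal G)
    (R : TreeRep G T) (hstar : IsSubdividedStar T) :
    lpt G = 1 ∧
      ∃ v : V, ∀ (a b : V) (p : G.Walk a b), IsLongestPath G p → v ∈ p.support := by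
  have := hconn.nonempty
  exact substar_gallai_general hconn R hstar.exists_isStarCenter exists_isLongestPath
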